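/- arXiv:2008.12437 — 2 statements merged into one kernel-verified Lean document; each statement's English description precedes it below -/
import Mathlib

section
/- Let V be a finite-dimensional representation of a group G over a field k with dim V ≥ 1. If V is dense then V is thick, and if V is thick then V is irreducible. -/
/-!
Dense implies thick: let `V₁` have basis `v₁, …, vₘ` and let `V₂` have codimension `m`. The
alternating form `w ↦ det (w₁ mod V₂, …, wₘ mod V₂)` is nonzero at `w` only if the `wᵢ` span a
complement of `V₂`, so it suffices to find `g` at which it does not vanish on `ρ(g)v₁, …, ρ(g)vₘ`.
It factors through a nonzero linear functional on `⋀^m V`, and by `m`-density the orbit of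
`v₁ ∧ ⋯ ∧ vₘ ≠ 0` spans `⋀^m V`, so that functional cannot vanish on the whole orbit.

Thick implies irreducible: if `W` is a proper nonzero invariant subspace, take a line `V₁ ⊆ W` and a
hyperplane `V₂ ⊇ W`. Every translate of `V₁` lies in `W ⊆ V₂`, contradicting `1`-thickness.
-/

open Module

variable {k G V : Type*} [Field k] [Group G] [AddCommGroup V] [Module k V]

/-- A finite-dimensional representation `ρ : G → GL(V)` is `m`-thick if for any subspaces
`V₁, V₂ ⊆ V` with `dim V₁ = m` and `dim V₂ = dim V - m` there is `g ∈ G` with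
`(ρ(g) V₁) ⊕ V₂ = V`. -/
def IsMThick (ρ : Representation k G V) (m : ℕ) : Prop :=
  ∀ V₁ V₂ : Submodule k V, finrank k V₁ = m → finrank k V₂ = finrank k V - m →
    ∃ g : G, IsCompl (V₁.map (ρ g)) V₂

/-- A representation is `m`-dense if the induced representation on the `m`-th exterior power
`⋀^m V` (a submodule of the exterior algebra, on which `g` acts by the functorially induced map)
is irreducible: `⋀^m V` is nonzero and has no `G`-invariant subspace other than `0` and itself. -/
def IsMDense (ρ : Representation k G V) (m : ℕ) : Prop :=
  ⋀[k]^m V ≠ ⊥ ∧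
  ∀ W : Submodule k (ExteriorAlgebra k V), W ≤ ⋀[k]^m V →
    (∀ g : G, W.map (ExteriorAlgebra.map (ρ g)).toLinearMap ≤ W) →
    W = ⊥ ∨ W = ⋀[k]^m V

/-- A representation is irreducible if `V` is nonzero and has no `G`-invariant subspace
other than `0` and `V`. -/
def RepIrreducible (ρ : Representation k G V) : Prop :=
  (∃ v : V, v ≠ 0) ∧
  ∀ W : Submodule k V, (∀ g : G, W.map (ρ g) ≤ W) → W = ⊥ ∨ W = ⊤

/-- A representation is thick if it is `m`-thick for every `0 < m < dim V`. -/
def IsThick (ρ : Representation k G V) : Prop :=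
  ∀ m : ℕ, 0 < m → m < finrank k V → IsMThick ρ m

/-- A representation is dense if it is `m`-dense for every `0 < m < dim V`. -/
def IsDense (ρ : Representation k G V) : Prop :=
  ∀ m : ℕ, 0 < m → m < finrank k V → IsMDense ρ m

theorem isCompl_span_range_ker_of_isUnit_det {ι R M N : Type*} [Fintype ι] [DecidableEq ι]
    [CommRing R] [AddCommGroup M] [Module R M] [AddCommGroup N] [Module R N]
    (b : Basis ι R N) (f : M →ₗ[R] N) {w : ι → M} (hw : IsUnit (b.det (f ∘ w))) :
    IsCompl (Submodule.span R (Set.range w)) (LinearMap.ker f) := by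
  obtain ⟨hli, hspan⟩ := b.is_basis_iff_det.2 hw
  have hmap : (Submodule.span R (Set.range w)).map f = ⊤ := by
    rw [Submodule.map_span, ← Set.range_comp, hspan]
  refine ⟨Submodule.range_ker_disjoint hli, codisjoint_iff.2 ?_⟩
  rw [← Submodule.comap_map_eq, hmap, Submodule.comap_top]

theorem map_exteriorPower_le {R M N : Type*} [CommRing R] [AddCommGroup M] [Module R M]
    [AddCommGroup N] [Module R N] (f : M →ₗ[R] N) (m : ℕ) :
    (⋀[R]^m M).map (ExteriorAlgebra.map f).toLinearMap ≤ ⋀[R]^m N := by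
  rw [Submodule.map_pow, ExteriorAlgebra.ι_range_map_map]
  exact pow_le_pow_left' LinearMap.map_le_range m

theorem ιMulti_ne_zero_of_linearIndependent {m : ℕ} {v : Fin m → V} (hv : LinearIndependent k v) :
    exteriorPower.ιMulti k m v ≠ 0 := by
  have h := (exteriorPower.ιMulti_family_linearIndependent_field m hv).ne_zero
    (Set.powersetCard.ofFinEmbEquiv (RelEmbedding.refl _))
  simpa [exteriorPower.ιMulti_family] using h

namespace IsMDense

theorem span_orbit_eq_exteriorPower {ρ : Representation k G V} {m : ℕ} (h : IsMDense ρ m)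
    {x : ExteriorAlgebra k V} (hx : x ∈ ⋀[k]^m V) (hx0 : x ≠ 0) :
    Submodule.span k (Set.range fun g => ExteriorAlgebra.map (ρ g) x) = ⋀[k]^m V := by
  refine (h.2 _ ?_ fun g => ?_).resolve_left fun hbot => hx0 ?_
  · rw [Submodule.span_le, Set.range_subset_iff]
    exact fun g => map_exteriorPower_le (ρ g) m (Submodule.mem_map_of_mem hx)
  · rw [Submodule.map_span_le]
    rintro _ ⟨g', rfl⟩
    refine Submodule.subset_span ⟨g * g', ?_⟩
    simp only [map_mul, AlgHom.toLinearMap_apply, Module.End.mul_eq_comp,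
      ← ExteriorAlgebra.map_comp_map, AlgHom.comp_apply]
  · rw [Submodule.span_eq_bot] at hbot
    simpa [Module.End.one_eq_id] using hbot _ ⟨1, rfl⟩

theorem exists_alternatingMap_ne_zero {ρ : Representation k G V} {m : ℕ} (h : IsMDense ρ m)
    {N : Type*} [AddCommGroup N] [Module k N] {f : V [⋀^Fin m]→ₗ[k] N} (hf : f ≠ 0)
    {v : Fin m → V} (hv : LinearIndependent k v) : ∃ g, f (ρ g ∘ v) ≠ 0 := by
  by_contra! hzero
  let φ : ExteriorAlgebra k V →ₗ[k] N := ExteriorAlgebra.liftAlternating (Pi.single m f)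
  have hφ (u : Fin m → V) : φ (ExteriorAlgebra.ιMulti k m u) = f u := by
    rw [ExteriorAlgebra.liftAlternating_apply_ιMulti, Pi.single_eq_same]
  have hker : ⋀[k]^m V ≤ LinearMap.ker φ := by
    rw [← h.span_orbit_eq_exteriorPower (exteriorPower.ιMulti k m v).2
      (Subtype.coe_ne_coe.2 (ιMulti_ne_zero_of_linearIndependent hv)),
      Submodule.span_le, Set.range_subset_iff]
    intro g
    rw [SetLike.mem_coe, LinearMap.mem_ker, exteriorPower.ιMulti_apply_coe,
      ExteriorAlgebra.map_apply_ιMulti, hφ, hzero]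
  refine hf (AlternatingMap.ext fun u => ?_)
  rw [← hφ]
  exact hker (exteriorPower.ιMulti k m u).2

theorem isMThick [FiniteDimensional k V] {ρ : Representation k G V} {m : ℕ}
    (h : IsMDense ρ m) : IsMThick ρ m := by
  intro V₁ V₂ hV₁ hV₂
  have hquot : finrank k (V ⧸ V₂) = m := by
    have := V₂.finrank_quotient_add_finrank
    have := V₁.finrank_le
    omega
  let b := finBasisOfFinrankEq k (V ⧸ V₂) hquot
  let c := finBasisOfFinrankEq k V₁ hV₁
  let v : Fin m → V := V₁.subtype ∘ c
  have hv : LinearIndependent k v := c.linearIndependent.map' V₁.subtype V₁.ker_subtype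
  have hspan : Submodule.span k (Set.range v) = V₁ := by
    rw [Set.range_comp, ← Submodule.map_span, c.span_eq, Submodule.map_subtype_top]
  have hdet : b.det.compLinearMap V₂.mkQ ≠ 0 := fun h0 =>
    b.det_ne_zero (AlternatingMap.compLinearMap_injective _ V₂.mkQ_surjective
      (h0.trans (AlternatingMap.zero_compLinearMap _).symm))
  obtain ⟨g, hg⟩ := h.exists_alternatingMap_ne_zero hdet hv
  refine ⟨g, ?_⟩
  have hcompl := isCompl_span_range_ker_of_isUnit_det b V₂.mkQ (w := ρ g ∘ v) hg.isUnit
  rwa [Set.range_comp, ← Submodule.map_span, hspan, Submodule.ker_mkQ] at hcompl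

end IsMDense

theorem isMThick_finrank [FiniteDimensional k V] (ρ : Representation k G V) :
    IsMThick ρ (finrank k V) := by
  intro V₁ V₂ hV₁ hV₂
  rw [Nat.sub_self, Submodule.finrank_eq_zero] at hV₂
  obtain rfl := Submodule.eq_top_of_finrank_eq hV₁
  subst hV₂
  refine ⟨1, ?_⟩
  rw [map_one, Module.End.one_eq_id, Submodule.map_id]
  exact isCompl_top_bot

theorem IsMThick.repIrreducible [FiniteDimensional k V] [Nontrivial V]
    {ρ : Representation k G V} (h : IsMThick ρ 1) : RepIrreducible ρ := by
  refine ⟨exists_ne 0, fun W hW => ?_⟩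
  by_contra! ⟨hbot, htop⟩
  obtain ⟨w, hwW, hw0⟩ := W.exists_mem_ne_zero_of_ne_bot hbot
  obtain ⟨f, hf0, hWf⟩ := W.exists_le_ker_of_lt_top htop.lt_top
  have hker : finrank k (LinearMap.ker f) = finrank k V - 1 :=
    Nat.eq_sub_of_add_eq (Module.Dual.finrank_ker_add_one_of_ne_zero hf0)
  obtain ⟨g, hg⟩ := h (Submodule.span k {w}) (LinearMap.ker f) (finrank_span_singleton hw0) hker
  have hle : (Submodule.span k {w}).map (ρ g) ≤ LinearMap.ker f :=
    calc
      _ ≤ W.map (ρ g) := Submodule.map_mono ((Submodule.span_singleton_le_iff_mem w W).2 hwW)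
      _ ≤ W := hW g
      _ ≤ LinearMap.ker f := hWf
  exact hf0 (LinearMap.ker_eq_top.1 (hg.codisjoint.eq_top_of_ge hle))

theorem IsThick.isMThick_one [FiniteDimensional k V] {ρ : Representation k G V} (h : IsThick ρ)
    (hdim : 1 ≤ finrank k V) : IsMThick ρ 1 := by
  obtain hone | hlt := hdim.eq_or_lt
  · exact hone ▸ isMThick_finrank ρ
  · exact h 1 one_pos hlt

/-- For a finite-dimensional representation `V` with `dim V ≥ 1`: dense implies thick,
and thick implies irreducible. -/
theorem dense_implies_thick_implies_irreducible [FiniteDimensional k V]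
    (ρ : Representation k G V) (hdim : 1 ≤ finrank k V) :
    (IsDense ρ → IsThick ρ) ∧ (IsThick ρ → RepIrreducible ρ) := by
  refine ⟨fun hdense m hpos hlt => (hdense m hpos hlt).isMThick, fun hthick => ?_⟩
  have : Nontrivial V := finrank_pos_iff.1 hdim
  exact (hthick.isMThick_one hdim).repIrreducible
end

section
/- For n ≥ 2, the standard representation of the special orthogonal group SO_{2n}(ℂ) on ℂ^{2n} is m-dense for every integer m with 0 < m < 2n and m ≠ n; that is, the induced representation of SO_{2n}(ℂ) on ⋀^m ℂ^{2n} is irreducible for each such m. -/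
open Module Matrix

/-!
Over a field `K` in which `2 ≠ 0`, already the signed permutation matrices of determinant `1` act
irreducibly on `⋀^m K^N` when `m ≤ N` and `2m ≠ N`. Let `e_S`, for `S` a set of `m` indices, be the
standard basis of `⋀^m K^N`. Changing the sign at two indices `i` and `j` multiplies `e_S` by
`(-1)^{|S ∩ {i, j}|}`; if `i` lies in the symmetric difference of `S` and `T` and `j` outside it,
this tells `e_S` and `e_T` apart. Such `i` and `j` exist unless `S = T` or `T` is the complement of
`S`, which `2m ≠ N` excludes. So the `e_S` are common eigenvectors with distinct characters, and a
nonzero invariant subspace contains one of them. It then contains all, since the group permutes the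
`e_S` transitively: a permutation carrying `S` to `T` in increasing order is corrected to
determinant `1` by a sign at an index outside `S`.
-/

section SeparatedBasis

lemma repr_apply_of_apply_basis_eq_smul {R M I : Type*} [CommSemiring R] [AddCommMonoid M]
    [Module R M] {b : Basis I R M} {f : End R M} {μ : I → R} (hf : ∀ i, f (b i) = μ i • b i)
    (x : M) (i : I) :
    b.repr (f x) i = μ i * b.repr x i := by
  have hcoord : b.coord i ∘ₗ f = μ i • b.coord i := by
    refine b.ext fun j => ?_
    obtain rfl | hji := eq_or_ne j i
    · simp [hf]
    · simp [hf, hji]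
  exact LinearMap.congr_fun hcoord x

variable {K V I : Type*} [Field K] [AddCommGroup V] [Module K V] {b : Basis I K V}
  {W : Submodule K V}

lemma basis_mem_of_separated {s : I}
    (hsep : ∀ t ≠ s, ∃ f : End K V, W ∈ f.invtSubmodule ∧
      ∃ μ : I → K, (∀ i, f (b i) = μ i • b i) ∧ μ s ≠ μ t)
    {x : V} (hx : x ∈ W) (hxs : b.repr x s ≠ 0) : b s ∈ W := by
  induction hF : (b.repr x).support using Finset.strongInduction generalizing x with
  | H F ih =>
    subst hF
    by_cases hother : ∃ t ≠ s, b.repr x t ≠ 0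
    · obtain ⟨t, hts, hxt⟩ := hother
      obtain ⟨f, hfW, μ, hfb, hμ⟩ := hsep t hts
      -- `f - μ t` kills the coordinate at `t` and keeps the one at `s`
      have hcoord (i : I) : b.repr (f x - μ t • x) i = (μ i - μ t) * b.repr x i := by
        rw [map_sub, map_smul, Finsupp.sub_apply, Finsupp.smul_apply, smul_eq_mul,
          repr_apply_of_apply_basis_eq_smul hfb, sub_mul]
      refine ih _ ?_ (W.sub_mem (hfW hx) (W.smul_mem (μ t) hx)) ?_ rfl
      · refine Finset.ssubset_iff_subset_ne.mpr ⟨fun i hi => ?_, fun heq => ?_⟩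
        · rw [Finsupp.mem_support_iff, hcoord] at hi
          exact Finsupp.mem_support_iff.mpr (right_ne_zero_of_mul hi)
        · have ht := Finsupp.mem_support_iff.mpr hxt
          rw [← heq, Finsupp.mem_support_iff, hcoord, sub_self, zero_mul] at ht
          exact ht rfl
      · rw [hcoord]
        exact mul_ne_zero (sub_ne_zero.mpr hμ) hxs
    · push Not at hother
      have hx_eq : x = b.repr x s • b s := by
        refine b.ext_elem fun t => ?_
        obtain rfl | hts := eq_or_ne t s
        · simp
        · simp [hother t hts, hts.symm]
      rw [hx_eq] at hx
      exact (W.smul_mem_iff hxs).mp hx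

theorem eq_bot_or_eq_top_of_separated_of_transitive
    (hsep : ∀ s t, s ≠ t → ∃ f : End K V, W ∈ f.invtSubmodule ∧
      ∃ μ : I → K, (∀ i, f (b i) = μ i • b i) ∧ μ s ≠ μ t)
    (htrans : ∀ s t, ∃ f : End K V, W ∈ f.invtSubmodule ∧ f (b s) = b t) :
    W = ⊥ ∨ W = ⊤ := by
  refine or_iff_not_imp_left.mpr fun hW => ?_
  obtain ⟨x, hxW, hx⟩ := W.ne_bot_iff.mp hW
  obtain ⟨s, hs⟩ := Finsupp.ne_iff.mp (b.repr.map_ne_zero_iff.mpr hx)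
  have hsW : b s ∈ W := basis_mem_of_separated (fun t ht => hsep s t ht.symm) hxW hs
  rw [eq_top_iff, ← b.span_eq, Submodule.span_le]
  rintro _ ⟨t, rfl⟩
  obtain ⟨f, hfW, hf⟩ := htrans s t
  exact hf ▸ hfW hsW

end SeparatedBasis

section ExteriorPower

variable {R M N : Type*} [CommRing R] [AddCommGroup M] [Module R M] [AddCommGroup N] [Module R N]

lemma exteriorPower_coe_map {m : ℕ} (f : M →ₗ[R] N) (x : ⋀[R]^m M) :
    (exteriorPower.map m f x : ExteriorAlgebra R N) = ExteriorAlgebra.map f x := by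
  have hcomp : (⋀[R]^m N).subtype ∘ₗ exteriorPower.map m f =
      (ExteriorAlgebra.map f).toLinearMap ∘ₗ (⋀[R]^m M).subtype := by
    refine exteriorPower.linearMap_ext (AlternatingMap.ext fun v => ?_)
    simp [ExteriorAlgebra.map_apply_ιMulti]
  exact LinearMap.congr_fun hcomp x

lemma exteriorPower_ne_bot [Nontrivial R] [Module.Free R M] [Module.Finite R M] {m : ℕ}
    (hm : m ≤ finrank R M) : ⋀[R]^m M ≠ ⊥ := by
  intro hbot
  have hpos : 0 < finrank R (⋀[R]^m M) := by
    rw [exteriorPower.finrank_eq]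
    exact Nat.choose_pos hm
  rw [hbot, finrank_bot] at hpos
  exact hpos.false

lemma ιMulti_family_smul {ι : Type*} [LinearOrder ι] {m : ℕ} (c : ι → R) (v : ι → M)
    (S : Set.powersetCard ι m) :
    exteriorPower.ιMulti_family R m (fun i => c i • v i) S =
      (∏ i ∈ S.1, c i) • exteriorPower.ιMulti_family R m v S := by
  have hprod : ∏ i ∈ S.1, c i = ∏ k : Fin m, c (Set.powersetCard.ofFinEmbEquiv.symm S k) := by
    rw [← Finset.prod_coe_sort, ← (S.1.orderIsoOfFin S.2).toEquiv.prod_comp]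
    rfl
  rw [hprod]
  exact (exteriorPower.ιMulti R m).map_smul_univ _ _

end ExteriorPower

section Sign

lemma intCast_units_injective {R : Type*} [Ring R] (h2 : (2 : R) ≠ 0) :
    Function.Injective fun u : ℤˣ => ((u : ℤ) : R) := by
  have h1 : (-1 : R) ≠ 1 := fun h => h2 <| by
    rw [← one_add_one_eq_two, ← neg_eq_iff_add_eq_zero, h]
  intro u v huv
  rcases Int.units_eq_one_or u with rfl | rfl <;> rcases Int.units_eq_one_or v with rfl | rfl <;>
    simp_all [eq_comm]

variable {ι : Type*} [Fintype ι]

lemma exists_units_prod_ne {S T : Finset ι} (hne : S ≠ T) (hcompl : ¬IsCompl S T) :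
    ∃ d : ι → ℤˣ, ∏ i, d i = 1 ∧ ∏ i ∈ S, d i ≠ ∏ i ∈ T, d i := by
  classical
  obtain ⟨i, hi⟩ := Finset.symmDiff_nonempty.mpr hne
  obtain ⟨j, hj⟩ : ∃ j, j ∉ symmDiff S T := by
    by_contra! hall
    exact hcompl ((symmDiff_eq_top S T).mp (Finset.eq_univ_of_forall hall))
  have hprod (U : Finset ι) :
      ∏ k ∈ U, (Pi.mulSingle i (-1) * Pi.mulSingle j (-1) : ι → ℤˣ) k =
        (if i ∈ U then -1 else 1) * (if j ∈ U then -1 else 1) := by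
    simp only [Pi.mul_apply, Finset.prod_mul_distrib, Finset.prod_pi_mulSingle']
  refine ⟨Pi.mulSingle i (-1) * Pi.mulSingle j (-1), (hprod _).trans (by simp), ?_⟩
  rw [hprod, hprod]
  rw [Finset.mem_symmDiff] at hi hj
  by_cases hiS : i ∈ S <;> by_cases hjS : j ∈ S <;> simp_all

open Set.powersetCard in
lemma exists_perm_units_comp_eq [LinearOrder ι] {m : ℕ} (S T : Set.powersetCard ι m) :
    ∃ (σ : Equiv.Perm ι) (d : ι → ℤˣ), σ.sign * ∏ i, d i = 1 ∧ (∀ i ∈ S, d i = 1) ∧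
      ∀ k, σ (ofFinEmbEquiv.symm S k) = ofFinEmbEquiv.symm T k := by
  obtain rfl | hST := eq_or_ne S T
  · exact ⟨1, 1, by simp⟩
  obtain ⟨j, -, hj⟩ := (exists_mem_notMem_iff_ne T S).mp hST.symm
  obtain ⟨σ, hσ⟩ := Equiv.Perm.exists_extending_pair _ _ (ofFinEmbEquiv.symm S).injective
    (ofFinEmbEquiv.symm T).injective
  refine ⟨σ, Pi.mulSingle j σ.sign, ?_, fun i hi => ?_, hσ⟩
  · rw [Fintype.prod_pi_mulSingle', Int.units_mul_self]
  · exact Pi.mulSingle_eq_of_ne (ne_of_mem_of_not_mem hi hj) _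

end Sign

section SignedPermMatrix

variable {ι : Type*} [Fintype ι] {R : Type*} [CommRing R]

section DecidableEq

variable [DecidableEq ι]

variable (R) in
/-- The signed permutation matrix sending the standard basis vector `e_i` to `d i • e_(σ i)`.
The inverse appears because `Equiv.Perm.permMatrix` acts by precomposition. -/
def signedPermMatrix (σ : Equiv.Perm ι) (d : ι → ℤˣ) : Matrix ι ι R :=
  (σ⁻¹).permMatrix R * diagonal fun i => ((d i : ℤ) : R)

lemma transpose_signedPermMatrix_mul_self (σ : Equiv.Perm ι) (d : ι → ℤˣ) :
    (signedPermMatrix R σ d)ᵀ * signedPermMatrix R σ d = 1 := by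
  have hperm : ((σ⁻¹).permMatrix R)ᵀ * (σ⁻¹).permMatrix R = 1 := by
    rw [transpose_permMatrix, ← permMatrix_mul, mul_inv_cancel, permMatrix_one]
  have hsq (i : ι) : ((d i : ℤ) : R) * ((d i : ℤ) : R) = 1 := by
    rw [← Int.cast_mul, Int.units_coe_mul_self, Int.cast_one]
  rw [signedPermMatrix, transpose_mul, Matrix.mul_assoc, ← Matrix.mul_assoc _ _ (diagonal _), hperm,
    Matrix.one_mul, diagonal_transpose, diagonal_mul_diagonal]
  simp only [hsq, diagonal_one]

lemma det_signedPermMatrix (σ : Equiv.Perm ι) (d : ι → ℤˣ) :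
    (signedPermMatrix R σ d).det = ((σ.sign * ∏ i, d i : ℤˣ) : ℤ) := by
  rw [signedPermMatrix, det_mul, det_permutation, det_diagonal, Equiv.Perm.sign_inv]
  push_cast
  rfl

lemma signedPermMatrix_mulVec_single (σ : Equiv.Perm ι) (d : ι → ℤˣ) (i : ι) :
    signedPermMatrix R σ d *ᵥ Pi.single i 1 = ((d i : ℤ) : R) • Pi.single (σ i) 1 := by
  ext j
  rw [signedPermMatrix, ← mulVec_mulVec, permMatrix_mulVec]
  simp [Pi.single_apply, Equiv.symm_apply_eq]

end DecidableEq

variable [LinearOrder ι] {m : ℕ}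

lemma map_signedPermMatrix_ιMulti_family (σ : Equiv.Perm ι) (d : ι → ℤˣ)
    (S : Set.powersetCard ι m) :
    exteriorPower.map m (signedPermMatrix R σ d).mulVecLin
        (exteriorPower.ιMulti_family R m (Pi.basisFun R ι) S) =
      (((∏ i ∈ S.1, d i : ℤˣ) : ℤ) : R) •
        exteriorPower.ιMulti_family R m (Pi.basisFun R ι ∘ σ) S := by
  have hcomp : (signedPermMatrix R σ d).mulVecLin ∘ Pi.basisFun R ι =
      fun i => ((d i : ℤ) : R) • (Pi.basisFun R ι ∘ σ) i := by
    funext i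
    simpa using signedPermMatrix_mulVec_single (R := R) σ d i
  rw [exteriorPower.map_apply_ιMulti_family, hcomp, ιMulti_family_smul]
  push_cast
  rfl

lemma exists_signedPermMatrix_separating (h2 : (2 : R) ≠ 0) (hm : 2 * m ≠ Fintype.card ι)
    {S T : Set.powersetCard ι m} (hST : S ≠ T) :
    ∃ d : ι → ℤˣ, ∏ i, d i = 1 ∧ ∃ μ : Set.powersetCard ι m → R,
      (∀ U, exteriorPower.map m (signedPermMatrix R 1 d).mulVecLin
        ((Pi.basisFun R ι).exteriorPower m U) = μ U • (Pi.basisFun R ι).exteriorPower m U) ∧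
      μ S ≠ μ T := by
  have hcompl : ¬IsCompl S.1 T.1 := fun h => hm <| by
    have hcard := S.1.card_add_card_compl
    rwa [h.compl_eq, S.2, T.2, ← two_mul] at hcard
  obtain ⟨d, hd, hne⟩ := exists_units_prod_ne (Subtype.coe_ne_coe.mpr hST) hcompl
  refine ⟨d, hd, fun U => ((∏ i ∈ U.1, d i : ℤˣ) : ℤ), fun U => ?_,
    (intCast_units_injective h2).ne hne⟩
  simpa only [exteriorPower.basis_apply, Equiv.Perm.coe_one, Function.comp_id] using
    map_signedPermMatrix_ιMulti_family 1 d U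

variable (R) in
lemma exists_signedPermMatrix_map_basis_eq (S T : Set.powersetCard ι m) :
    ∃ (σ : Equiv.Perm ι) (d : ι → ℤˣ), σ.sign * ∏ i, d i = 1 ∧
      exteriorPower.map m (signedPermMatrix R σ d).mulVecLin
        ((Pi.basisFun R ι).exteriorPower m S) = (Pi.basisFun R ι).exteriorPower m T := by
  obtain ⟨σ, d, hdet, hd, hσ⟩ := exists_perm_units_comp_eq S T
  refine ⟨σ, d, hdet, ?_⟩
  rw [exteriorPower.basis_apply, exteriorPower.basis_apply, map_signedPermMatrix_ιMulti_family,
    Finset.prod_eq_one hd, Units.val_one, Int.cast_one, one_smul]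
  exact congrArg (exteriorPower.ιMulti R m) (funext fun k => congrArg (Pi.basisFun R ι) (hσ k))

end SignedPermMatrix

theorem eq_bot_or_eq_top_of_invariant_signedPermMatrix {K ι : Type*} [Field K]
    (h2 : (2 : K) ≠ 0) [Fintype ι] [DecidableEq ι] {m : ℕ} (hm : 2 * m ≠ Fintype.card ι)
    {W : Submodule K (⋀[K]^m (ι → K))}
    (hW : ∀ (σ : Equiv.Perm ι) (d : ι → ℤˣ), σ.sign * ∏ i, d i = 1 →
      W ∈ End.invtSubmodule (exteriorPower.map m (signedPermMatrix K σ d).mulVecLin)) :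
    W = ⊥ ∨ W = ⊤ := by
  -- the basis of `⋀^m` by `m`-element subsets needs an order on the indices
  obtain ⟨_, hdec⟩ : ∃ o : LinearOrder ι, o.toDecidableEq = ‹DecidableEq ι› :=
    ⟨LinearOrder.lift' _ (Fintype.equivFin ι).injective, Subsingleton.elim _ _⟩
  subst hdec
  refine eq_bot_or_eq_top_of_separated_of_transitive
    (b := (Pi.basisFun K ι).exteriorPower m) (fun S T hST => ?_) (fun S T => ?_)
  · obtain ⟨d, hd, hsep⟩ := exists_signedPermMatrix_separating h2 hm hST
    exact ⟨_, hW 1 d (by rw [Equiv.Perm.sign_one, one_mul, hd]), hsep⟩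
  · obtain ⟨σ, d, hdet, hmap⟩ := exists_signedPermMatrix_map_basis_eq K S T
    exact ⟨_, hW σ d hdet, hmap⟩

theorem soEvenC_standard_mDense_general {K ι : Type*} [Field K] (h2 : (2 : K) ≠ 0) [Fintype ι]
    [DecidableEq ι] {m : ℕ} (hle : m ≤ Fintype.card ι) (hm : 2 * m ≠ Fintype.card ι) :
    ⋀[K]^m (ι → K) ≠ ⊥ ∧
    ∀ W : Submodule K (ExteriorAlgebra K (ι → K)),
      W ≤ ⋀[K]^m (ι → K) →
      (∀ (σ : Equiv.Perm ι) (d : ι → ℤˣ), σ.sign * ∏ i, d i = 1 →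
        W.map (ExteriorAlgebra.map (signedPermMatrix K σ d).mulVecLin).toLinearMap ≤ W) →
      W = ⊥ ∨ W = ⋀[K]^m (ι → K) := by
  refine ⟨exteriorPower_ne_bot (by rwa [finrank_fintype_fun_eq_card]), fun W hWle hW => ?_⟩
  have hinv (σ : Equiv.Perm ι) (d : ι → ℤˣ) (hdet : σ.sign * ∏ i, d i = 1) :
      W.comap (⋀[K]^m (ι → K)).subtype ∈
        End.invtSubmodule (exteriorPower.map m (signedPermMatrix K σ d).mulVecLin) := by
    intro x hx
    rw [Submodule.mem_comap, Submodule.mem_comap, Submodule.subtype_apply, exteriorPower_coe_map]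
    exact hW σ d hdet (Submodule.mem_map_of_mem hx)
  refine (eq_bot_or_eq_top_of_invariant_signedPermMatrix h2 hm hinv).imp (fun hbot => ?_)
    (fun htop => ?_)
  · exact (Submodule.disjoint_iff_comap_eq_bot.mpr hbot).eq_bot_of_ge hWle
  · exact hWle.antisymm (Submodule.comap_subtype_eq_top.mp htop)

/-- For `n ≥ 2`, the standard representation of `SO_{2n}(ℂ)` (complex matrices `A` with
`AᵀA = 1` and `det A = 1`) on `ℂ^{2n}` is `m`-dense for every `0 < m < 2n` with `m ≠ n`:
the induced representation on `⋀^m ℂ^{2n}` is irreducible for each such `m`. -/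
theorem soEvenC_standard_mDense (n : ℕ) (hn : 2 ≤ n) (m : ℕ) (h0 : 0 < m) (hm : m < 2 * n)
    (hmn : m ≠ n) :
    ⋀[ℂ]^m (Fin (2 * n) → ℂ) ≠ ⊥ ∧
    ∀ W : Submodule ℂ (ExteriorAlgebra ℂ (Fin (2 * n) → ℂ)),
      W ≤ ⋀[ℂ]^m (Fin (2 * n) → ℂ) →
      (∀ A : Matrix (Fin (2 * n)) (Fin (2 * n)) ℂ, Aᵀ * A = 1 → A.det = 1 →
        W.map (ExteriorAlgebra.map A.mulVecLin).toLinearMap ≤ W) →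
      W = ⊥ ∨ W = ⋀[ℂ]^m (Fin (2 * n) → ℂ) := by
  obtain ⟨hne, hirr⟩ := soEvenC_standard_mDense_general (K := ℂ) (ι := Fin (2 * n)) (m := m)
    two_ne_zero (by simpa using hm.le) (by simpa using hmn)
  exact ⟨hne, fun W hWle hW => hirr W hWle fun σ d hdet => hW _
    (transpose_signedPermMatrix_mul_self σ d) (by rw [det_signedPermMatrix, hdet]; simp)⟩
end
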